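/- arXiv:2302.05810 — 2 statements merged into one kernel-verified Lean document; each statement's English description precedes it below -/
import Mathlib

section
/- The distortion of the class of median schemes with three uniformly sampled voters is at most 1.80: for all m, n ≥ 1, every vote profile (v_1,…,v_n) of budgets on m projects, and every function h assigning to each ordered triple (i,j,k) ∈ [n]³ a median-scheme outcome h(i,j,k) for (v_i, v_j, v_k), one has (1/n⁴) Σ_{(i,j,k,l)∈[n]⁴} d(h(i,j,k), v_l) ≤ 1.80 · (1/n) · min_{p∈𝔹} Σ_{l=1}^n d(p, v_l). -/
/-- A budget on `m` projects: nonnegative allocations summing to 1. -/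
def IsBudget {m : ℕ} (b : Fin m → ℝ) : Prop :=
  (∀ j, 0 ≤ b j) ∧ ∑ j, b j = 1

/-- The ℓ₁ cost `d(a,b)`. -/
noncomputable def cost {m : ℕ} (a b : Fin m → ℝ) : ℝ := ∑ j, |a j - b j|

/-- The overlap utility `u(a,b)`. -/
noncomputable def util {m : ℕ} (a b : Fin m → ℝ) : ℝ := ∑ j, min (a j) (b j)

/-- `z` is a median-scheme outcome for `(a,b,c)`: a budget maximizing
`u(z,a) + u(z,b) + u(z,c)` over all budgets. -/
def MedianOutcome {m : ℕ} (a b c z : Fin m → ℝ) : Prop :=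
  IsBudget z ∧ ∀ z' : Fin m → ℝ, IsBudget z' →
    util z' a + util z' b + util z' c ≤ util z a + util z b + util z c

/-- `z` is a median-scheme outcome for the triple of budgets `(w_r)_{r∈R}`:
a budget maximizing `Σ_{r∈R} u(z, w_r)` over all budgets. -/
def MedianOutcomeOn {m : ℕ} {ι : Type*} [Fintype ι]
    (w : ι → Fin m → ℝ) (R : Finset ι) (z : Fin m → ℝ) : Prop :=
  IsBudget z ∧ ∀ z' : Fin m → ℝ, IsBudget z' →
    ∑ r ∈ R, util z' (w r) ≤ ∑ r ∈ R, util z (w r)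

/-!
Moving a small amount between two projects shows that a median-scheme outcome `z` lies, in every
project, between two of the three votes, and that it lies either weakly below the median of the
votes in all projects or weakly above it in all projects. Let `ε` be `1` or `-1` accordingly.

Sample four voters; each of them is left out of one of the four triples. All budgets have sum `1`,
so the distances may be perturbed by multiples of `z j - p j` for a triple and of `v j - p j` for a
voter, with multipliers that depend on the signs `ε` but not on the project `j`. After summation
over the projects this is no change, yet it makes the inequality true in each project separately.

In one project, replacing every number by its indicator at a level `t` and integrating over `t`
reduces to entries `0` and `1`, and `x ↦ 1 - x` reduces to `p j = 0`. Comparing the majorities of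
the entries with those of the signs leaves an inequality for the probabilities that `0, …, 4` of the
sampled voters have entry `1`, which is a cubic polynomial inequality in the weight of these voters.
-/

open Finset Function Filter

section MedianOutcomes

variable {m : ℕ}

/-- The allocation obtained from `z` by moving the amount `δ` from project `k` to project `j`. -/
def transfer (z : Fin m → ℝ) (j k : Fin m) (δ : ℝ) : Fin m → ℝ :=
  update (update z j (z j + δ)) k (z k - δ)

theorem sum_transfer {z : Fin m → ℝ} {j k : Fin m} (hjk : j ≠ k) (δ : ℝ) (φ : Fin m → ℝ → ℝ) :
    ∑ i, φ i (transfer z j k δ i) =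
      ∑ i, φ i (z i) + (φ j (z j + δ) - φ j (z j)) + (φ k (z k - δ) - φ k (z k)) := by
  have hsum : ∑ i, (φ i (transfer z j k δ i) - φ i (z i)) =
      (φ j (z j + δ) - φ j (z j)) + (φ k (z k - δ) - φ k (z k)) := by
    rw [Fintype.sum_eq_add j k hjk fun i hi => by simp [transfer, hi.1, hi.2]]
    simp [transfer, hjk]
  rw [sum_sub_distrib] at hsum
  linarith

theorem IsBudget.transfer {z : Fin m → ℝ} (hz : IsBudget z) {j k : Fin m} (hjk : j ≠ k) {δ : ℝ}
    (hδ : 0 ≤ δ) (hk : δ ≤ z k) : IsBudget (transfer z j k δ) := by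
  refine ⟨fun i => ?_, ?_⟩
  · obtain rfl | hik := eq_or_ne i k
    · simpa [_root_.transfer] using hk
    obtain rfl | hij := eq_or_ne i j
    · simpa [_root_.transfer, hik] using add_nonneg (hz.1 i) hδ
    · simpa [_root_.transfer, hik, hij] using hz.1 i
  · rw [sum_transfer hjk δ fun _ x => x, hz.2]
    ring

theorem IsBudget.le_one {b : Fin m → ℝ} (hb : IsBudget b) (j : Fin m) : b j ≤ 1 :=
  hb.2 ▸ single_le_sum (fun i _ => hb.1 i) (mem_univ j)

theorem util_transfer {z : Fin m → ℝ} {j k : Fin m} (hjk : j ≠ k) (δ : ℝ) (b : Fin m → ℝ) :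
    util (transfer z j k δ) b = util z b + (min (z j + δ) (b j) - min (z j) (b j)) +
      (min (z k - δ) (b k) - min (z k) (b k)) :=
  sum_transfer hjk δ fun i x => min x (b i)

theorem eventually_le_min_add_sub_min (x b : ℝ) : ∀ᶠ δ in nhdsWithin (0 : ℝ) (Set.Ioi 0),
    δ * (if x < b then 1 else 0) ≤ min (x + δ) b - min x b := by
  split_ifs with hx
  · filter_upwards [Ioo_mem_nhdsGT (sub_pos.2 hx)] with δ hδ
    rw [min_eq_left hx.le, min_eq_left (by linarith [hδ.2])]
    linarith
  · filter_upwards [self_mem_nhdsWithin] with δ (hδ : 0 < δ)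
    rw [mul_zero, sub_nonneg]
    exact min_le_min_right _ (by linarith)

theorem eventually_neg_le_min_sub_sub_min (x b : ℝ) : ∀ᶠ δ in nhdsWithin (0 : ℝ) (Set.Ioi 0),
    -(δ * (if x ≤ b then 1 else 0)) ≤ min (x - δ) b - min x b := by
  split_ifs with hx
  · filter_upwards [self_mem_nhdsWithin] with δ (hδ : 0 < δ)
    rw [min_eq_left hx, min_eq_left (by linarith)]
    linarith
  · rw [not_le] at hx
    filter_upwards [Ioo_mem_nhdsGT (sub_pos.2 hx)] with δ hδ
    rw [min_eq_right hx.le, min_eq_right (by linarith [hδ.2])]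
    simp

/-- The left-hand side is the gain of `∑ r ∈ R, util z (w r)` per unit moved to project `j`,
the right-hand side its loss per unit moved away from project `k`. -/
theorem MedianOutcomeOn.card_lt_le_card_le {ι : Type*} [Fintype ι] {w : ι → Fin m → ℝ}
    {R : Finset ι} {z : Fin m → ℝ} (h : MedianOutcomeOn w R z) (j : Fin m) {k : Fin m}
    (hk : 0 < z k) : #{r ∈ R | z j < w r j} ≤ #{r ∈ R | z k ≤ w r k} := by
  obtain rfl | hjk := eq_or_ne j k
  · exact card_le_card (monotone_filter_right R fun _ _ => le_of_lt)
  obtain ⟨δ, hgain, hloss, hδ, hδk⟩ :=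
    ((eventually_all.2 fun r => eventually_le_min_add_sub_min (z j) (w r j)).and
      ((eventually_all.2 fun r => eventually_neg_le_min_sub_sub_min (z k) (w r k)).and
        (Ioo_mem_nhdsGT hk))).exists
  have hopt := h.2 _ (h.1.transfer hjk hδ.le hδk.le)
  simp only [util_transfer hjk, sum_add_distrib] at hopt
  have hcard := add_le_add (sum_le_sum fun r (_ : r ∈ R) => hgain r)
    (sum_le_sum fun r (_ : r ∈ R) => hloss r)
  rw [sum_neg_distrib, ← mul_sum, ← mul_sum, sum_boole, sum_boole] at hcard
  have : δ * #{r ∈ R | z j < w r j} ≤ δ * #{r ∈ R | z k ≤ w r k} := by linarith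
  exact_mod_cast le_of_mul_le_mul_left this hδ

theorem IsBudget.eq_of_le {a b : Fin m → ℝ} (ha : IsBudget a) (hb : IsBudget b)
    (hab : ∀ j, a j ≤ b j) (j : Fin m) : a j = b j :=
  (sum_eq_sum_iff_of_le fun i _ => hab i).1 (ha.2.trans hb.2.symm) j (mem_univ j)

section

variable {ι : Type*} [Fintype ι] {w : ι → Fin m → ℝ} {R : Finset ι} {z : Fin m → ℝ}

theorem MedianOutcomeOn.exists_ge (h : MedianOutcomeOn w R z) (hR : R.Nonempty)
    (hw : ∀ r ∈ R, IsBudget (w r)) (k : Fin m) : ∃ r ∈ R, z k ≤ w r k := by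
  by_contra! hk
  obtain ⟨r, hr⟩ := hR
  have hpos : 0 < z k := ((hw r hr).1 k).trans_lt (hk r hr)
  have hle (j : Fin m) : w r j ≤ z j := by
    by_contra! hj
    have hgain : 0 < #{r ∈ R | z j < w r j} := card_pos.2 ⟨r, mem_filter.2 ⟨hr, hj⟩⟩
    have hloss : #{r ∈ R | z k ≤ w r k} = 0 := by simpa [filter_eq_empty_iff] using hk
    have := h.card_lt_le_card_le j hpos
    omega
  exact (hk r hr).ne ((hw r hr).eq_of_le h.1 hle k)

theorem MedianOutcomeOn.exists_le (h : MedianOutcomeOn w R z) (hR : R.Nonempty)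
    (hw : ∀ r ∈ R, IsBudget (w r)) (j : Fin m) : ∃ r ∈ R, w r j ≤ z j := by
  by_contra! hj
  obtain ⟨r, hr⟩ := hR
  have hle (k : Fin m) : z k ≤ w r k := by
    obtain hk | hk := (h.1.1 k).eq_or_lt
    · exact hk ▸ (hw r hr).1 k
    have hcard := h.card_lt_le_card_le j hk
    rw [filter_true_of_mem hj] at hcard
    exact (filter_eq_self.1 (eq_of_subset_of_card_le (filter_subset _ R) hcard)) r hr
  exact (hj r hr).ne (h.1.eq_of_le (hw r hr) hle j)

end

section Median

variable {α β : Type*} [LinearOrder α] [LinearOrder β]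

/-- The median of three elements of a linear order. -/
def median (f : Fin 3 → α) : α :=
  max (min (f 0) (f 1)) (max (min (f 0) (f 2)) (min (f 1) (f 2)))

theorem lt_median_iff {f : Fin 3 → α} {x : α} : x < median f ↔ 2 ≤ #{i | x < f i} := by
  rw [card_filter, Fin.sum_univ_three]
  by_cases h0 : x < f 0 <;> by_cases h1 : x < f 1 <;> by_cases h2 : x < f 2 <;>
    simp [median, h0, h1, h2]

theorem le_median_iff {f : Fin 3 → α} {x : α} : x ≤ median f ↔ 2 ≤ #{i | x ≤ f i} := by
  rw [card_filter, Fin.sum_univ_three]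
  by_cases h0 : x ≤ f 0 <;> by_cases h1 : x ≤ f 1 <;> by_cases h2 : x ≤ f 2 <;>
    simp [median, h0, h1, h2]

theorem median_comp_of_monotone {g : α → β} (hg : Monotone g) (f : Fin 3 → α) :
    median (g ∘ f) = g (median f) := by
  simp [median, hg.map_min, hg.map_max]

theorem median_comp_of_antitone {g : α → β} (hg : Antitone g) (f : Fin 3 → α) :
    median (g ∘ f) = g (median f) := by
  simp only [median, comp_apply, hg.map_max, hg.map_min]
  grind

end Median

/-- The value `z` is a possible entry of a median-scheme outcome for three voters with entries `f`:
it lies between two of these entries and weakly below (`ε = 1`) or weakly above (`ε = -1`)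
their median. -/
def IsSided (ε z : ℝ) (f : Fin 3 → ℝ) : Prop :=
  (∃ i, f i ≤ z) ∧ (∃ i, z ≤ f i) ∧ (ε = 1 ∧ z ≤ median f ∨ ε = -1 ∧ median f ≤ z)

theorem IsSided.comp_monotone {ε z : ℝ} {f : Fin 3 → ℝ} (h : IsSided ε z f) {g : ℝ → ℝ}
    (hg : Monotone g) : IsSided ε (g z) (g ∘ f) := by
  obtain ⟨⟨i, hi⟩, ⟨k, hk⟩, hside⟩ := h
  rw [IsSided, median_comp_of_monotone hg]
  exact ⟨⟨i, hg hi⟩, ⟨k, hg hk⟩, hside.imp (And.imp_right (@hg _ _)) (And.imp_right (@hg _ _))⟩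

theorem IsSided.comp_antitone {ε z : ℝ} {f : Fin 3 → ℝ} (h : IsSided ε z f) {g : ℝ → ℝ}
    (hg : Antitone g) : IsSided (-ε) (g z) (g ∘ f) := by
  obtain ⟨⟨i, hi⟩, ⟨k, hk⟩, hside⟩ := h
  rw [IsSided, median_comp_of_antitone hg, neg_eq_iff_eq_neg, neg_inj]
  exact ⟨⟨k, hg hk⟩, ⟨i, hg hi⟩,
    hside.symm.imp (And.imp_right (@hg _ _)) (And.imp_right (@hg _ _))⟩

theorem IsSided.mem_Icc {ε y a c : ℝ} {f : Fin 3 → ℝ} (h : IsSided ε y f)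
    (hf : ∀ i, f i ∈ Set.Icc a c) : y ∈ Set.Icc a c := by
  obtain ⟨⟨i, hi⟩, ⟨k, hk⟩, -⟩ := h
  exact ⟨(hf i).1.trans hi, hk.trans (hf k).2⟩

/-- All entries of a median-scheme outcome lie on the same side of the voters' medians, since a
transfer from an entry above the median to one below it gains two and loses at most one vote. -/
theorem MedianOutcomeOn.exists_isSided {w : Fin 3 → Fin m → ℝ} {z : Fin m → ℝ}
    (h : MedianOutcomeOn w univ z) (hw : ∀ i, IsBudget (w i)) :
    ∃ ε, ∀ j, IsSided ε (z j) (fun i => w i j) := by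
  have hlo (j : Fin m) : ∃ i, w i j ≤ z j := by
    simpa using h.exists_le univ_nonempty (fun i _ => hw i) j
  have hhi (j : Fin m) : ∃ i, z j ≤ w i j := by
    simpa using h.exists_ge univ_nonempty (fun i _ => hw i) j
  by_cases habove : ∀ j, median (fun i => w i j) ≤ z j
  · exact ⟨-1, fun j => ⟨hlo j, hhi j, .inr ⟨rfl, habove j⟩⟩⟩
  push Not at habove
  obtain ⟨j, hj⟩ := habove
  refine ⟨1, fun k => ⟨hlo k, hhi k, .inl ⟨rfl, ?_⟩⟩⟩
  obtain hk | hk := (h.1.1 k).eq_or_lt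
  · exact hk ▸ le_max_of_le_left (le_min ((hw 0).1 k) ((hw 1).1 k))
  · exact le_median_iff.2 ((lt_median_iff.1 hj).trans (h.card_lt_le_card_le j hk))

end MedianOutcomes

section Sampling

variable {ι : Type*} [Fintype ι] {w : ι → ℝ} {k : ℕ}

/-- The expectation of `f` over `k` independent samples from the distribution `w` on `ι`. -/
def sampleMean (w : ι → ℝ) (k : ℕ) (f : (Fin k → ι) → ℝ) : ℝ :=
  ∑ q, (∏ i, w (q i)) * f q

theorem sampleMean_zero (f : (Fin 0 → ι) → ℝ) : sampleMean w 0 f = f ![] := by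
  simp [sampleMean, Subsingleton.elim default ![]]

theorem sampleMean_succ (x : Fin (k + 1)) (f : (Fin (k + 1) → ι) → ℝ) :
    sampleMean w (k + 1) f = ∑ a, w a * sampleMean w k fun t => f (x.insertNth a t) := by
  simp_rw [sampleMean, ← (Fin.insertNthEquiv (fun _ => ι) x).sum_comp, Fintype.sum_prod_type,
    mul_sum, ← mul_assoc]
  simp [Fin.prod_univ_succAbove _ x, Fin.insertNthEquiv]

theorem sampleMean_add (f g : (Fin k → ι) → ℝ) :
    sampleMean w k (fun q => f q + g q) = sampleMean w k f + sampleMean w k g := by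
  simp only [sampleMean, mul_add, sum_add_distrib]

theorem sampleMean_sub (f g : (Fin k → ι) → ℝ) :
    sampleMean w k (fun q => f q - g q) = sampleMean w k f - sampleMean w k g := by
  simp only [sampleMean, mul_sub, sum_sub_distrib]

theorem sampleMean_const_mul (c : ℝ) (f : (Fin k → ι) → ℝ) :
    sampleMean w k (fun q => c * f q) = c * sampleMean w k f := by
  simp only [sampleMean, mul_sum, mul_left_comm]

theorem sampleMean_sum {κ : Type*} (S : Finset κ) (f : κ → (Fin k → ι) → ℝ) :
    sampleMean w k (fun q => ∑ j ∈ S, f j q) = ∑ j ∈ S, sampleMean w k (f j) := by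
  simp only [sampleMean, mul_sum]
  exact sum_comm

theorem sampleMean_mono (hw : ∀ a, 0 ≤ w a) {f g : (Fin k → ι) → ℝ} (h : ∀ q, f q ≤ g q) :
    sampleMean w k f ≤ sampleMean w k g :=
  sum_le_sum fun q _ => mul_le_mul_of_nonneg_left (h q) (prod_nonneg fun i _ => hw (q i))

theorem sampleMean_const (hw : ∑ a, w a = 1) (c : ℝ) : sampleMean w k (fun _ => c) = c := by
  rw [sampleMean, ← sum_mul, ← Fintype.sum_pow, hw, one_pow, one_mul]

theorem sampleMean_apply (hw : ∑ a, w a = 1) (x : Fin (k + 1)) (f : ι → ℝ) :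
    sampleMean w (k + 1) (fun q => f (q x)) = ∑ a, w a * f a := by
  simp [sampleMean_succ x, sampleMean_const hw]

theorem sampleMean_removeNth (hw : ∑ a, w a = 1) (x : Fin (k + 1)) (f : (Fin k → ι) → ℝ) :
    sampleMean w (k + 1) (fun q => f (x.removeNth q)) = sampleMean w k f := by
  simp [sampleMean_succ x, Fin.removeNth_insertNth, ← sum_mul, hw]

theorem sampleMean_three (f : (Fin 3 → ι) → ℝ) :
    sampleMean w 3 f = ∑ a, ∑ b, ∑ c, w a * w b * w c * f ![a, b, c] := by
  simp [sampleMean_succ 0, sampleMean_zero, mul_sum, mul_assoc]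

theorem sum_prod_filter_mem_eq [DecidableEq ι] (A : Finset ι) (S : Finset (Fin k)) :
    ∑ q : Fin k → ι with univ.filter (q · ∈ A) = S, ∏ i, w (q i) =
      (∑ a ∈ A, w a) ^ #S * (∑ a ∈ Aᶜ, w a) ^ (k - #S) := by
  have hset : ({q | univ.filter (q · ∈ A) = S} : Finset (Fin k → ι)) =
      Fintype.piFinset fun i => if i ∈ S then A else Aᶜ := by
    ext q
    simp only [mem_filter_univ, Fintype.mem_piFinset, Finset.ext_iff]
    refine forall_congr' fun i => ?_
    by_cases hi : i ∈ S <;> simp [hi]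
  rw [hset, ← prod_univ_sum]
  simp [apply_ite (fun B : Finset ι => ∑ a ∈ B, w a), prod_ite,
    filter_not, ← compl_eq_univ_sdiff, card_compl]

theorem sampleMean_card_filter_mem [DecidableEq ι] (hw : ∑ a, w a = 1) (A : Finset ι)
    (g : ℕ → ℝ) :
    sampleMean w k (fun q => g #{i | q i ∈ A}) = ∑ j ∈ range (k + 1),
      k.choose j * ((∑ a ∈ A, w a) ^ j * (1 - ∑ a ∈ A, w a) ^ (k - j) * g j) := by
  have hcompl : ∑ a ∈ Aᶜ, w a = 1 - ∑ a ∈ A, w a := by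
    rw [← hw, ← sum_add_sum_compl A, add_sub_cancel_left]
  calc sampleMean w k (fun q => g #{i | q i ∈ A})
    _ = ∑ S : Finset (Fin k), ∑ q : Fin k → ι with univ.filter (q · ∈ A) = S,
          (∏ i, w (q i)) * g #{i | q i ∈ A} := (sum_fiberwise _ _ _).symm
    _ = ∑ S : Finset (Fin k), (∑ a ∈ A, w a) ^ #S * (1 - ∑ a ∈ A, w a) ^ (k - #S) * g #S := by
      refine sum_congr rfl fun S _ => ?_
      rw [← hcompl, ← sum_prod_filter_mem_eq, sum_mul]
      exact sum_congr rfl fun q hq => by rw [(mem_filter.1 hq).2]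
    _ = _ := by
      simpa using sum_powerset_apply_card (x := (univ : Finset (Fin k)))
        fun j => (∑ a ∈ A, w a) ^ j * (1 - ∑ a ∈ A, w a) ^ (k - j) * g j

end Sampling

section Layers

/-- The layer at height `t` of the real number `x`: the numbers in `[0, 1]` are the means of their
layers at heights in `[0, 1]`. -/
noncomputable def layer (t x : ℝ) : ℝ :=
  if t ≤ x then 1 else 0

theorem monotone_layer (t : ℝ) : Monotone (layer t) := by
  intro x y hxy
  by_cases hx : t ≤ x
  · simp [layer, hx, hx.trans hxy]
  · by_cases hy : t ≤ y <;> simp [layer, hx, hy]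

theorem layer_eq_zero_or_one (t x : ℝ) : layer t x = 0 ∨ layer t x = 1 := by
  by_cases hx : t ≤ x <;> simp [layer, hx]

/-- The function `f` is integrable on `[0, 1]` with integral `x`. -/
def HasUnitIntegral (f : ℝ → ℝ) (x : ℝ) : Prop :=
  IntervalIntegrable f MeasureTheory.volume 0 1 ∧ ∫ t in (0 : ℝ)..1, f t = x

namespace HasUnitIntegral

variable {f g : ℝ → ℝ} {x y : ℝ}

theorem add (hf : HasUnitIntegral f x) (hg : HasUnitIntegral g y) :
    HasUnitIntegral (fun t => f t + g t) (x + y) :=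
  ⟨hf.1.add hg.1, by rw [intervalIntegral.integral_add hf.1 hg.1, hf.2, hg.2]⟩

theorem sub (hf : HasUnitIntegral f x) (hg : HasUnitIntegral g y) :
    HasUnitIntegral (fun t => f t - g t) (x - y) :=
  ⟨hf.1.sub hg.1, by rw [intervalIntegral.integral_sub hf.1 hg.1, hf.2, hg.2]⟩

theorem const_mul (c : ℝ) (hf : HasUnitIntegral f x) :
    HasUnitIntegral (fun t => c * f t) (c * x) :=
  ⟨hf.1.const_mul c, by rw [intervalIntegral.integral_const_mul, hf.2]⟩

theorem sum {κ : Type*} (S : Finset κ) {f : κ → ℝ → ℝ} {x : κ → ℝ}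
    (hf : ∀ i ∈ S, HasUnitIntegral (f i) (x i)) :
    HasUnitIntegral (fun t => ∑ i ∈ S, f i t) (∑ i ∈ S, x i) := by
  refine ⟨?_, ?_⟩
  · simpa only [Finset.sum_fn] using IntervalIntegrable.sum S fun i hi => (hf i hi).1
  · rw [intervalIntegral.integral_finsetSum fun i hi => (hf i hi).1]
    exact sum_congr rfl fun i hi => (hf i hi).2

theorem nonpos (hf : HasUnitIntegral f x) (h : ∀ t, f t ≤ 0) : x ≤ 0 := by
  simpa [hf.2] using intervalIntegral.integral_mono_on zero_le_one hf.1
    (intervalIntegrable_const (c := (0 : ℝ))) fun t _ => h t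

end HasUnitIntegral

theorem hasUnitIntegral_layer {x : ℝ} (hx : x ∈ Set.Icc 0 1) :
    HasUnitIntegral (fun t => layer t x) x := by
  have hind : (fun t => layer t x) = Set.indicator {t | t ≤ x} fun _ => 1 := by
    ext t
    simp [layer, Set.indicator_apply]
  rw [hind]
  refine ⟨?_, by simp [intervalIntegral.integral_indicator hx]⟩
  rw [intervalIntegrable_iff]
  exact (MeasureTheory.integrableOn_const (by simp)).indicator measurableSet_Iic

theorem hasUnitIntegral_abs_layer_sub {x y : ℝ} (hx : x ∈ Set.Icc 0 1) (hy : y ∈ Set.Icc 0 1) :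
    HasUnitIntegral (fun t => |layer t x - layer t y|) |x - y| := by
  have hmax : max x y ∈ Set.Icc 0 1 := ⟨le_max_of_le_left hx.1, max_le hx.2 hy.2⟩
  have hmin : min x y ∈ Set.Icc 0 1 := ⟨le_min hx.1 hy.1, min_le_of_left_le hx.2⟩
  simp only [abs_sub_comm (layer _ x), abs_sub_comm x, ← max_sub_min_eq_abs,
    ← (monotone_layer _).map_max, ← (monotone_layer _).map_min]
  exact (hasUnitIntegral_layer hmax).sub (hasUnitIntegral_layer hmin)

end Layers

section Lagrangian

variable {ι : Type*} [Fintype ι] {w : ι → ℝ} {v : ι → ℝ} {z ε : (Fin 3 → ι) → ℝ} {p : ℝ}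

/-- The mean distance of `y` to the entries `v` of the voters. -/
noncomputable def meanDist (w v : ι → ℝ) (y : ℝ) : ℝ :=
  ∑ l, w l * |y - v l|

/-- The Lagrangian of one project, for voters with entries `v`, outcomes with entries `z` and signs
`ε`, and a reference budget with entry `p`: the mean over four sampled voters of the distances of
the outcomes for the four triples, minus `4 * 1.8` times the mean distance of `p`. The triple that
omits voter `x` carries a multiplier `± 7 / 8` for the constraint that outcome and reference budget
have the same sum, by its sign; voter `x` carries a multiplier `± 2 / 5` for the same constraint on
his vote, by the majority of the signs of the three triples that contain him. Both multipliers are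
close to the values that minimise the constant obtained from this argument. -/
noncomputable def lagrangian (w v : ι → ℝ) (z ε : (Fin 3 → ι) → ℝ) (p : ℝ) : ℝ :=
  sampleMean w 4 (fun q => ∑ x : Fin 4,
      (meanDist w v (z (x.removeNth q)) + 7 / 8 * ε (x.removeNth q) * (z (x.removeNth q) - p)
        - 2 / 5 * median (x.removeNth fun y : Fin 4 => ε (y.removeNth q)) * (v (q x) - p))) -
    36 / 5 * meanDist w v p

theorem lagrangian_one_sub (w v : ι → ℝ) (z ε : (Fin 3 → ι) → ℝ) (p : ℝ) :
    lagrangian w (fun l => 1 - v l) (fun t => 1 - z t) (fun t => -ε t) (1 - p) =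
      lagrangian w v z ε p := by
  have hdist (y : ℝ) : meanDist w (fun l => 1 - v l) (1 - y) = meanDist w v y := by
    simp only [meanDist, sub_sub_sub_cancel_left, abs_sub_comm]
  have hmedian (f : Fin 3 → ℝ) : median (fun i => -f i) = -median f :=
    median_comp_of_antitone (fun _ _ => neg_le_neg) f
  have hmajority (q : Fin 4 → ι) (x : Fin 4) :
      median (x.removeNth fun y : Fin 4 => -ε (y.removeNth q)) =
        -median (x.removeNth fun y : Fin 4 => ε (y.removeNth q)) := hmedian _
  simp only [lagrangian, hdist, hmajority, sub_sub_sub_cancel_left]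
  congr! 5 <;> ring

theorem hasUnitIntegral_meanDist_layer (hv : ∀ l, v l ∈ Set.Icc 0 1) {y : ℝ}
    (hy : y ∈ Set.Icc 0 1) :
    HasUnitIntegral (fun s => meanDist w (fun l => layer s (v l)) (layer s y)) (meanDist w v y) :=
  .sum _ fun l _ => (hasUnitIntegral_abs_layer_sub hy (hv l)).const_mul (w l)

theorem hasUnitIntegral_lagrangian_layer (hv : ∀ l, v l ∈ Set.Icc 0 1)
    (hz : ∀ t, z t ∈ Set.Icc 0 1) (hp : p ∈ Set.Icc 0 1) :
    HasUnitIntegral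
      (fun s => lagrangian w (fun l => layer s (v l)) (fun t => layer s (z t)) ε (layer s p))
      (lagrangian w v z ε p) := by
  have hdist {y : ℝ} (hy : y ∈ Set.Icc 0 1) := hasUnitIntegral_meanDist_layer (w := w) hv hy
  have hconstraint (c : ℝ) {y : ℝ} (hy : y ∈ Set.Icc 0 1) :
      HasUnitIntegral (fun s => c * (layer s y - layer s p)) (c * (y - p)) :=
    ((hasUnitIntegral_layer hy).sub (hasUnitIntegral_layer hp)).const_mul c
  refine HasUnitIntegral.sub ?_ ((hdist hp).const_mul _)
  refine .sum _ fun q _ => .const_mul _ (.sum _ fun x _ => ?_)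
  exact ((hdist (hz _)).add (hconstraint _ (hz _))).sub (hconstraint _ (hv _))

theorem sum_lagrangian {m : ℕ} (hw : ∑ a, w a = 1) {v : ι → Fin m → ℝ} (hv : ∀ l, IsBudget (v l))
    {h : (Fin 3 → ι) → Fin m → ℝ} (hh : ∀ t, IsBudget (h t)) {p : Fin m → ℝ} (hp : IsBudget p)
    (ε : (Fin 3 → ι) → ℝ) :
    ∑ j, lagrangian w (fun l => v l j) (fun t => h t j) ε (p j) =
      4 * sampleMean w 3 (fun t => ∑ l, w l * cost (h t) (v l)) -
        36 / 5 * ∑ l, w l * cost p (v l) := by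
  have hdist (a : Fin m → ℝ) :
      ∑ j, meanDist w (fun l => v l j) (a j) = ∑ l, w l * cost a (v l) := by
    simp only [meanDist, cost, mul_sum]
    exact sum_comm
  have hconstraint (c : ℝ) {a : Fin m → ℝ} (ha : IsBudget a) : ∑ j, c * (a j - p j) = 0 := by
    rw [← mul_sum, sum_sub_distrib, ha.2, hp.2, sub_self, mul_zero]
  simp only [lagrangian]
  rw [sum_sub_distrib, ← mul_sum, hdist, ← sampleMean_sum]
  have hquadruple (q : Fin 4 → ι) :
      ∑ j, ∑ x : Fin 4, (meanDist w (fun l => v l j) (h (x.removeNth q) j)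
        + 7 / 8 * ε (x.removeNth q) * (h (x.removeNth q) j - p j)
        - 2 / 5 * median (x.removeNth fun y : Fin 4 => ε (y.removeNth q)) * (v (q x) j - p j)) =
      ∑ x : Fin 4, ∑ l, w l * cost (h (x.removeNth q)) (v l) := by
    rw [sum_comm]
    refine sum_congr rfl fun x _ => ?_
    rw [sum_sub_distrib, sum_add_distrib, hdist, hconstraint _ (hh _), hconstraint _ (hv _),
      add_zero, sub_zero]
  simp only [hquadruple]
  rw [sampleMean_sum]
  simp only [sampleMean_removeNth hw _ fun t => ∑ l, w l * cost (h t) (v l), sum_const,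
    card_univ, Fintype.card_fin, nsmul_eq_mul, Nat.cast_ofNat]

end Lagrangian

section ZeroOneEntries

theorem median_eq_ite {α : Type*} [LinearOrder α] {f : Fin 3 → α} {a c : α}
    (hf : ∀ i, f i = a ∨ f i = c) : median f = if 2 ≤ #{i | f i = c} then c else a := by
  rw [card_filter, Fin.sum_univ_three]
  obtain rfl | hac := eq_or_ne a c
  · simp [median, fun i => (hf i).elim id id]
  obtain h0 | h0 := hf 0 <;> obtain h1 | h1 := hf 1 <;> obtain h2 | h2 := hf 2 <;>
    simp [median, h0, h1, h2, hac]

theorem card_filter_removeNth_le (B D : Fin 4 → Bool) :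
    #{x | B x ∧ 2 ≤ #{i | x.removeNth D i}} ≤
      2 * #{x | D x ∧ 2 ≤ #{i | x.removeNth B i}} + if #{x | B x} = 1 then 1 else 0 := by
  -- If the left-hand side is positive, then `D` has two elements. All of them count on the right
  -- if `B` has at least three elements; if `B` has two, an element of `D` outside `B` counts.
  decide +revert

theorem sum_mul_one_sub_median_le {b e : Fin 4 → ℝ} (hb : ∀ x, b x = 0 ∨ b x = 1)
    (he : ∀ x, e x = 1 ∨ e x = -1) :
    ∑ x, b x * (1 - median (x.removeNth e)) ≤
      2 * (∑ x, (1 - e x) * median (x.removeNth b) + if #{x | b x = 1} = 1 then 1 else 0) := by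
  have hleft (x : Fin 4) : b x * (1 - median (x.removeNth e)) =
      2 * if b x = 1 ∧ 2 ≤ #{i | x.removeNth e i = -1} then 1 else 0 := by
    rw [median_eq_ite (f := x.removeNth e) fun i => he _]
    obtain hx | hx := hb x
    · simp [hx]
    · by_cases hD : 2 ≤ #{i | x.removeNth e i = -1} <;> norm_num [hx, hD]
  have hright (x : Fin 4) : (1 - e x) * median (x.removeNth b) =
      2 * if e x = -1 ∧ 2 ≤ #{i | x.removeNth b i = 1} then 1 else 0 := by
    rw [median_eq_ite (f := x.removeNth b) fun i => hb _]
    obtain hx | hx := he x <;> norm_num [hx]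
  have hcard := card_filter_removeNth_le (fun x => decide (b x = 1)) (fun x => decide (e x = -1))
  simp only [Fin.removeNth, decide_eq_true_eq] at hcard
  simp only [hleft, hright, ← mul_sum, sum_boole]
  exact_mod_cast Nat.mul_le_mul_left 2 hcard

/-- An upper bound for the contribution `(1 - 2 * F + 7 / 8 * ε) * y` of a triple of voters with
entries in `{0, 1}` to the Lagrangian, in terms of the number of entries `1` among them, where `F`
is the total weight of the voters with entry `1`. -/
noncomputable def tripleBound (F : ℝ) : ℕ → ℝ
  | 0 => 0
  | 1 => max 0 (1 / 8 - 2 * F)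
  | 2 => max 0 (15 / 8 - 2 * F)
  | _ => 15 / 8 - 2 * F

theorem IsSided.mul_le_tripleBound {ε y : ℝ} {f : Fin 3 → ℝ} (h : IsSided ε y f)
    (hf : ∀ i, f i = 0 ∨ f i = 1) (F : ℝ) :
    (1 - 2 * F + 7 / 8 * ε) * y ≤
      tripleBound F #{i | f i = 1} - 7 / 8 * ((1 - ε) * median f) := by
  obtain ⟨⟨i, hi⟩, ⟨k, hk⟩, hside⟩ := h
  have hy0 : 0 ≤ y := le_trans (by obtain h | h := hf i <;> norm_num [h]) hi
  have hy1 : y ≤ 1 := hk.trans (by obtain h | h := hf k <;> norm_num [h])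
  have hnone (hcard : #{i | f i = 1} = 0) : y = 0 := by
    have hk1 : f k ≠ 1 := by simp_all [filter_eq_empty_iff]
    exact le_antisymm (hk.trans_eq ((hf k).resolve_right hk1)) hy0
  have hall (hcard : #{i | f i = 1} = 3) : y = 1 := by
    have hi1 : f i = 1 := card_filter_eq_iff.1 hcard i (mem_univ i)
    exact le_antisymm hy1 (hi1.symm.trans_le hi)
  have hmax (x : ℝ) : x * y ≤ max 0 x :=
    (mul_le_mul_of_nonneg_right (le_max_right 0 x) hy0).trans
      (mul_le_of_le_one_right (le_max_left 0 x) hy1)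
  have hcard : #{i | f i = 1} ≤ 3 := card_le_univ _
  rw [median_eq_ite hf] at hside ⊢
  generalize #{i | f i = 1} = n at *
  obtain rfl | rfl | rfl | rfl : n = 0 ∨ n = 1 ∨ n = 2 ∨ n = 3 := by omega
  · simp [tripleBound, hnone rfl]
  · simp only [tripleBound, Nat.not_ofNat_le_one, if_false] at hside ⊢
    obtain ⟨rfl, hy⟩ | ⟨rfl, -⟩ := hside
    · simp [le_antisymm hy hy0]
    · linarith [hmax (1 / 8 - 2 * F)]
  · simp only [tripleBound, le_refl, if_true] at hside ⊢
    obtain ⟨rfl, -⟩ | ⟨rfl, hy⟩ := hside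
    · linarith [hmax (15 / 8 - 2 * F)]
    · rw [le_antisymm hy1 hy]
      linarith [le_max_right 0 (15 / 8 - 2 * F)]
  · rw [hall rfl, if_pos (by norm_num), tripleBound]
    · linarith
    all_goals norm_num

theorem tripleBound_polynomial_le {F : ℝ} (h0 : 0 ≤ F) (h1 : F ≤ 1) :
    3 * (1 - F) ^ 2 * tripleBound F 1 + 3 * F * (1 - F) * tripleBound F 2 +
      F ^ 2 * tripleBound F 3 + 4 / 5 * (1 - F) ^ 3 ≤ 6 / 5 := by
  have hG : 0 ≤ 1 - F := sub_nonneg.2 h1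
  simp only [tripleBound]
  obtain hl | hl := le_total F (1 / 16)
  · rw [max_eq_right (by linarith), max_eq_right (by linarith)]
    nlinarith [mul_nonneg h0 hG, mul_nonneg h0 (sub_nonneg.2 hl)]
  obtain hr | hr := le_total F (15 / 16)
  · rw [max_eq_left (by linarith), max_eq_right (by linarith)]
    -- The inequality is nearly tight at `F = 53 / 200`.
    nlinarith [mul_nonneg (sq_nonneg (F - 53 / 200)) hG, sq_nonneg (F - 53 / 200)]
  · rw [max_eq_left (by linarith), max_eq_left (by linarith)]
    nlinarith [mul_nonneg h0 hG, mul_nonneg h0 (sub_nonneg.2 hr)]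

theorem sum_quadruple_le {b e y : Fin 4 → ℝ} (hb : ∀ x, b x = 0 ∨ b x = 1)
    (h : ∀ x, IsSided (e x) (y x) (x.removeNth b)) (F : ℝ) :
    ∑ x, ((1 - 2 * F + 7 / 8 * e x) * y x - 2 / 5 * median (x.removeNth e) * b x) ≤
      ∑ x : Fin 4, (tripleBound F #{i | x.removeNth b i = 1} - 2 / 5 * b x) +
        4 / 5 * if #{x | b x = 1} = 1 then 1 else 0 := by
  have he (x : Fin 4) : e x = 1 ∨ e x = -1 := (h x).2.2.imp And.left And.left
  have htriple := sum_le_sum fun x (_ : x ∈ univ) =>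
    (h x).mul_le_tripleBound (fun i => hb (x.succAbove i)) F
  have hmajority := sum_mul_one_sub_median_le hb he
  have hnonneg : 0 ≤ ∑ x, (1 - e x) * median (x.removeNth b) := by
    refine sum_nonneg fun x _ => mul_nonneg ?_ ?_
    · obtain hx | hx := he x <;> norm_num [hx]
    · rw [median_eq_ite (f := x.removeNth b) fun i => hb _]
      split_ifs <;> norm_num
  have hexpand : ∑ x, b x * (1 - median (x.removeNth e)) =
      ∑ x, b x - ∑ x, median (x.removeNth e) * b x := by
    rw [← sum_sub_distrib]
    exact sum_congr rfl fun x _ => by ring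
  simp only [sum_sub_distrib, mul_assoc (2 / 5 : ℝ), ← mul_sum] at htriple ⊢
  linarith

variable {ι : Type*} [Fintype ι] {w v : ι → ℝ} {z ε : (Fin 3 → ι) → ℝ} {p : ℝ}

theorem meanDist_of_zero_or_one (hw : ∑ l, w l = 1) (hv : ∀ l, v l = 0 ∨ v l = 1) {y : ℝ}
    (hy : y ∈ Set.Icc 0 1) :
    meanDist w v y = ∑ l, w l * v l + (1 - 2 * ∑ l, w l * v l) * y := by
  have hdist (l : ι) : w l * |y - v l| = w l * v l + (w l - 2 * (w l * v l)) * y := by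
    obtain hl | hl := hv l
    · rw [hl, sub_zero, abs_of_nonneg hy.1]
      ring
    · rw [hl, abs_of_nonpos (sub_nonpos.2 hy.2)]
      ring
  simp only [meanDist, hdist, sum_add_distrib, ← sum_mul, sum_sub_distrib, ← mul_sum, hw]

theorem sampleMean_tripleBound_le (hw : w ∈ stdSimplex ℝ ι) (hv : ∀ l, v l = 0 ∨ v l = 1) {F : ℝ}
    (hF : ∑ l, w l * v l = F) :
    sampleMean w 4 (fun q =>
      ∑ x : Fin 4, (F + tripleBound F #{i | v (x.removeNth q i) = 1} - 2 / 5 * v (q x)) +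
        4 / 5 * if #{x | v (q x) = 1} = 1 then 1 else 0) ≤ 36 / 5 * F := by
  classical
  obtain ⟨hw0, hw1⟩ := hw
  have hterm (l : ι) : 0 ≤ w l * v l ∧ w l * v l ≤ w l := by
    obtain hl | hl := hv l <;> simp [hl, hw0 l]
  have hF0 : 0 ≤ F := hF ▸ sum_nonneg fun l _ => (hterm l).1
  have hF1 : F ≤ 1 := hF ▸ hw1 ▸ sum_le_sum fun l _ => (hterm l).2
  have hones : ∑ l with v l = 1, w l = F := by
    rw [sum_filter, ← hF]
    refine sum_congr rfl fun l _ => ?_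
    obtain hl | hl := hv l <;> simp [hl]
  have hbinomial (k : ℕ) (g : ℕ → ℝ) := sampleMean_card_filter_mem (k := k) hw1 {l | v l = 1} g
  simp only [mem_filter_univ, hones] at hbinomial
  simp only [sampleMean_add, sampleMean_sum, sampleMean_sub, sampleMean_const hw1,
    sampleMean_const_mul, sampleMean_apply hw1, hF, hbinomial 3,
    sampleMean_removeNth hw1 _ fun t => tripleBound F #{i | v (t i) = 1}]
  rw [hbinomial 4 fun n => if n = 1 then 1 else 0]
  norm_num [sum_range_succ, Nat.choose, show tripleBound F 0 = 0 from rfl]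
  linarith [mul_le_mul_of_nonneg_left (tripleBound_polynomial_le hF0 hF1) hF0]

theorem lagrangian_zero_nonpos (hw : w ∈ stdSimplex ℝ ι) (hv : ∀ l, v l = 0 ∨ v l = 1)
    (hz : ∀ t, IsSided (ε t) (z t) (v ∘ t)) : lagrangian w v z ε 0 ≤ 0 := by
  have hvIcc (l : ι) : v l ∈ Set.Icc 0 1 := by obtain hl | hl := hv l <;> simp [hl]
  have hdist {y : ℝ} (hy : y ∈ Set.Icc 0 1) := meanDist_of_zero_or_one hw.2 hv hy
  have hzero := hdist (Set.left_mem_Icc.2 zero_le_one)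
  set F := ∑ l, w l * v l
  rw [mul_zero, add_zero] at hzero
  rw [lagrangian, hzero, sub_nonpos]
  refine (sampleMean_mono hw.1 fun q => ?_).trans (sampleMean_tripleBound_le hw hv rfl)
  have hquadruple := sum_quadruple_le (fun x => hv (q x)) (fun x => hz (x.removeNth q)) F
  have hsplit (x : Fin 4) :
      meanDist w v (z (x.removeNth q)) + 7 / 8 * ε (x.removeNth q) * (z (x.removeNth q) - 0)
        - 2 / 5 * median (x.removeNth fun y : Fin 4 => ε (y.removeNth q)) * (v (q x) - 0) =
      F + ((1 - 2 * F + 7 / 8 * ε (x.removeNth q)) * z (x.removeNth q)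
        - 2 / 5 * median (x.removeNth fun y : Fin 4 => ε (y.removeNth q)) * v (q x)) := by
    rw [hdist ((hz _).mem_Icc fun i => hvIcc _)]
    ring
  simp only [hsplit, add_sub_assoc F, sum_add_distrib, add_assoc]
  exact add_le_add_right hquadruple _

theorem lagrangian_nonpos_of_zero_or_one (hw : w ∈ stdSimplex ℝ ι)
    (hv : ∀ l, v l = 0 ∨ v l = 1) (hz : ∀ t, IsSided (ε t) (z t) (v ∘ t)) (hp : p = 0 ∨ p = 1) :
    lagrangian w v z ε p ≤ 0 := by
  obtain rfl | rfl := hp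
  · exact lagrangian_zero_nonpos hw hv hz
  · rw [← lagrangian_one_sub, sub_self]
    refine lagrangian_zero_nonpos hw (fun l => ?_) fun t =>
      (hz t).comp_antitone (g := (1 - ·)) fun _ _ hxy => sub_le_sub_left hxy 1
    obtain hl | hl := hv l <;> simp [hl]

theorem lagrangian_nonpos (hw : w ∈ stdSimplex ℝ ι) (hv : ∀ l, v l ∈ Set.Icc 0 1)
    (hz : ∀ t, IsSided (ε t) (z t) (v ∘ t)) (hp : p ∈ Set.Icc 0 1) :
    lagrangian w v z ε p ≤ 0 := by
  have hzIcc (t : Fin 3 → ι) : z t ∈ Set.Icc 0 1 := (hz t).mem_Icc fun i => hv (t i)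
  refine (hasUnitIntegral_lagrangian_layer hv hzIcc hp).nonpos fun s => ?_
  exact lagrangian_nonpos_of_zero_or_one hw (fun l => layer_eq_zero_or_one s _)
    (fun t => (hz t).comp_monotone (monotone_layer s)) (layer_eq_zero_or_one s p)

end ZeroOneEntries

theorem MedianOutcome.medianOutcomeOn {m : ℕ} {w : Fin 3 → Fin m → ℝ} {z : Fin m → ℝ}
    (h : MedianOutcome (w 0) (w 1) (w 2) z) : MedianOutcomeOn w univ z := by
  simpa only [MedianOutcomeOn, Fin.sum_univ_three, MedianOutcome] using h

theorem distortion_median_le_general {ι : Type*} [Fintype ι] {m : ℕ} {w : ι → ℝ}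
    (hw : w ∈ stdSimplex ℝ ι) {v : ι → Fin m → ℝ} (hv : ∀ i, IsBudget (v i))
    {h : ι → ι → ι → Fin m → ℝ} (hh : ∀ i j k, MedianOutcome (v i) (v j) (v k) (h i j k))
    {p : Fin m → ℝ} (hp : IsBudget p) :
    ∑ i, ∑ j, ∑ k, ∑ l, w i * w j * w k * w l * cost (h i j k) (v l) ≤
      1.80 * ∑ l, w l * cost p (v l) := by
  have houtcome (t : Fin 3 → ι) :
      MedianOutcomeOn (fun i => v (t i)) univ (h (t 0) (t 1) (t 2)) :=
    (hh _ _ _).medianOutcomeOn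
  choose ε hε using fun t => (houtcome t).exists_isSided fun i => hv (t i)
  have hsum := sum_lagrangian hw.2 hv (fun t => (houtcome t).1) hp ε
  have hnonpos := sum_nonpos fun j (_ : j ∈ univ) => lagrangian_nonpos hw
    (fun l => ⟨(hv l).1 j, (hv l).le_one j⟩) (fun t => hε t j) ⟨hp.1 j, hp.le_one j⟩
  have hmean : sampleMean w 3 (fun t => ∑ l, w l * cost (h (t 0) (t 1) (t 2)) (v l)) =
      ∑ i, ∑ j, ∑ k, ∑ l, w i * w j * w k * w l * cost (h i j k) (v l) := by
    rw [sampleMean_three]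
    simp only [mul_sum, mul_assoc]
    rfl
  rw [hsum, hmean] at hnonpos
  linarith

/-- The distortion of the class of median schemes with three uniformly sampled voters
is at most 1.80: for every vote profile of budgets and every selection `h` of
median-scheme outcomes for each ordered triple of voters,
`(1/n⁴) Σ_{i,j,k,l} d(h(i,j,k), v_l) ≤ 1.80 · (1/n) · min_{p∈𝔹} Σ_l d(p, v_l)`
(the minimum expressed via a minimizer `popt`). -/
theorem distortion_median_le {m n : ℕ} (hm : 1 ≤ m) (hn : 1 ≤ n)
    (v : Fin n → Fin m → ℝ) (hv : ∀ i, IsBudget (v i))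
    (h : Fin n → Fin n → Fin n → (Fin m → ℝ))
    (hh : ∀ i j k, MedianOutcome (v i) (v j) (v k) (h i j k))
    (popt : Fin m → ℝ) (hpopt : IsBudget popt)
    (hmin : ∀ p : Fin m → ℝ, IsBudget p → ∑ l, cost popt (v l) ≤ ∑ l, cost p (v l)) :
    (1 / (n : ℝ) ^ 4) * ∑ i, ∑ j, ∑ k, ∑ l, cost (h i j k) (v l) ≤
      1.80 * ((1 / (n : ℝ)) * ∑ l, cost popt (v l)) := by
  have hn' : (n : ℝ) ≠ 0 := Nat.cast_ne_zero.2 (by omega)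
  have hw : (fun _ : Fin n => 1 / (n : ℝ)) ∈ stdSimplex ℝ (Fin n) :=
    ⟨fun _ => by positivity, by simp [hn']⟩
  have hmain := distortion_median_le_general hw hv hh hpopt
  simp only [← mul_sum] at hmain
  convert hmain using 2
  ring
end

section
/- Median schemes respect project interactions: define the interaction-aware overlap utility û(a,b) = Σ_q min(f(a)_q, f(b)_q). Let a, b, c ∈ 𝔹 and suppose that at least one of a and b respects the project interactions. Then every budget z ∈ 𝔹 that maximizes û(z,a) + û(z,b) + û(z,c) over all budgets in 𝔹 respects the project interactions. -/
/-- Kinds of project groups: perfect complements, perfect substitutes, regular. -/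
inductive GroupKind where
  | compl : GroupKind
  | subst : GroupKind
  | reg : GroupKind

/-- A partition of the `m` projects into groups of perfect complements (size ≥ 2),
perfect substitutes (size ≥ 2), and regular singleton groups. -/
structure ProjectGroups (m : ℕ) where
  numGroups : ℕ
  grp : Fin m → Fin numGroups
  kind : Fin numGroups → GroupKind
  nonempty : ∀ q, ∃ j, grp j = q
  compl_big : ∀ q, kind q = GroupKind.compl →
    2 ≤ (Finset.univ.filter (fun j => grp j = q)).card
  subst_big : ∀ q, kind q = GroupKind.subst →
    2 ≤ (Finset.univ.filter (fun j => grp j = q)).card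
  reg_singleton : ∀ q, kind q = GroupKind.reg →
    (Finset.univ.filter (fun j => grp j = q)).card = 1

namespace ProjectGroups

variable {m : ℕ} (gs : ProjectGroups m)

/-- The fiber (set of projects) of group `q`. -/
def fiber (q : Fin gs.numGroups) : Finset (Fin m) :=
  Finset.univ.filter (fun j => gs.grp j = q)

theorem fiber_nonempty (q : Fin gs.numGroups) : (gs.fiber q).Nonempty := by
  obtain ⟨j, hj⟩ := gs.nonempty q
  exact ⟨j, by simp [fiber, hj]⟩

/-- The efficiency function `f(b)_q`: for a perfect-complement group, `s(q)` times the
minimum allocation in the group; for a perfect-substitute group, the maximum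
allocation in the group; for a regular singleton group, the allocation of its unique
project (expressed as the maximum over the singleton). -/
noncomputable def eff (b : Fin m → ℝ) (q : Fin gs.numGroups) : ℝ :=
  match gs.kind q with
  | GroupKind.compl => ((gs.fiber q).card : ℝ) * (gs.fiber q).inf' (gs.fiber_nonempty q) b
  | GroupKind.subst => (gs.fiber q).sup' (gs.fiber_nonempty q) b
  | GroupKind.reg => (gs.fiber q).sup' (gs.fiber_nonempty q) b

/-- `b` respects the project interactions: all projects in each perfect-complement
group receive equal allocation, and at most one project in each perfect-substitute
group receives positive allocation. -/
def Respects (b : Fin m → ℝ) : Prop :=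
  (∀ q, gs.kind q = GroupKind.compl →
    ∀ j ∈ gs.fiber q, ∀ j' ∈ gs.fiber q, b j = b j') ∧
  (∀ q, gs.kind q = GroupKind.subst →
    ∀ j ∈ gs.fiber q, ∀ j' ∈ gs.fiber q, j ≠ j' → ¬(0 < b j ∧ 0 < b j'))

end ProjectGroups

/-- The interaction-aware overlap utility `û(a,b) = Σ_q min(f(a)_q, f(b)_q)`. -/
noncomputable def iutil {m : ℕ} (gs : ProjectGroups m) (a b : Fin m → ℝ) : ℝ :=
  ∑ q, min (gs.eff a q) (gs.eff b q)

/-!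
A nonnegative allocation `b` has total efficiency `∑ q, f(b)_q ≤ ∑ j, b_j`, with equality exactly
when it respects the interactions, and every nonnegative vector is the efficiency vector of an
allocation of the same total. A budget `z` violating the interactions therefore wastes some slack,
and being less efficient in total than a respecting reference budget, it falls short of it in some
group `p`. Reallocating so that `p` receives all the slack and no other efficiency changes
strictly increases the overlap with that reference and decreases the overlap with none.
-/

section OrderedMonoid

variable {ι M : Type*} [AddCommMonoid M] [LinearOrder M] [IsOrderedCancelAddMonoid M]
  {s : Finset ι}

theorem card_nsmul_inf'_eq_sum_iff (hs : s.Nonempty) (f : ι → M) :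
    s.card • s.inf' hs f = ∑ i ∈ s, f i ↔ ∀ i ∈ s, ∀ j ∈ s, f i = f j := by
  rw [← Finset.sum_const, Finset.sum_eq_sum_iff_of_le fun i hi => Finset.inf'_le f hi]
  constructor
  · intro h i hi j hj
    exact (h i hi).symm.trans (h j hj)
  · intro h i hi
    obtain ⟨k, hk, hinf⟩ := Finset.exists_mem_eq_inf' hs f
    exact hinf.trans (h k hk i hi)

theorem sup'_eq_sum_iff (hs : s.Nonempty) {f : ι → M} (hf : ∀ i ∈ s, 0 ≤ f i) :
    s.sup' hs f = ∑ i ∈ s, f i ↔ ∀ i ∈ s, ∀ j ∈ s, i ≠ j → ¬(0 < f i ∧ 0 < f j) := by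
  classical
  obtain ⟨k, hk, hsup⟩ := Finset.exists_mem_eq_sup' hs f
  have eq_iff_zero_off : s.sup' hs f = ∑ i ∈ s, f i ↔ ∀ i ∈ s.erase k, f i = 0 := by
    rw [hsup, ← Finset.add_sum_erase s f hk, left_eq_add,
      Finset.sum_eq_zero_iff_of_nonneg fun i hi => hf i (Finset.mem_of_mem_erase hi)]
  rw [eq_iff_zero_off]
  constructor
  · rintro hzero i hi j hj hij ⟨hi_pos, hj_pos⟩
    have eq_of_pos : ∀ l ∈ s, 0 < f l → l = k := fun l hl hl_pos =>
      by_contra fun hlk => hl_pos.ne' (hzero l (Finset.mem_erase.2 ⟨hlk, hl⟩))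
    exact hij ((eq_of_pos i hi hi_pos).trans (eq_of_pos j hj hj_pos).symm)
  · intro h i hi
    obtain ⟨hik, his⟩ := Finset.mem_erase.1 hi
    by_contra hne
    have hi_pos : 0 < f i := (hf i his).lt_of_ne' hne
    have hle : f i ≤ f k := hsup ▸ Finset.le_sup' f his
    exact h i his k hk hik ⟨hi_pos, hi_pos.trans_le hle⟩

end OrderedMonoid

namespace ProjectGroups

section Efficiency

variable {m : ℕ} (gs : ProjectGroups m)

theorem mem_fiber {q : Fin gs.numGroups} {j : Fin m} : j ∈ gs.fiber q ↔ gs.grp j = q := by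
  simp [fiber]

theorem eff_of_compl (b : Fin m → ℝ) {q : Fin gs.numGroups} (hq : gs.kind q = .compl) :
    gs.eff b q = (gs.fiber q).card • (gs.fiber q).inf' (gs.fiber_nonempty q) b := by
  rw [eff, hq, nsmul_eq_mul]

theorem eff_of_ne_compl (b : Fin m → ℝ) {q : Fin gs.numGroups} (hq : gs.kind q ≠ .compl) :
    gs.eff b q = (gs.fiber q).sup' (gs.fiber_nonempty q) b := by
  unfold eff
  split <;> first | contradiction | rfl

variable {b : Fin m → ℝ}

theorem eff_nonneg (hb : 0 ≤ b) (q : Fin gs.numGroups) : 0 ≤ gs.eff b q := by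
  by_cases hq : gs.kind q = .compl
  · rw [gs.eff_of_compl b hq]
    exact nsmul_nonneg (Finset.le_inf' _ _ fun j _ => hb j) _
  · obtain ⟨j, hj⟩ := gs.fiber_nonempty q
    rw [gs.eff_of_ne_compl b hq]
    exact (hb j).trans (Finset.le_sup' b hj)

theorem eff_le_sum_fiber (hb : 0 ≤ b) (q : Fin gs.numGroups) :
    gs.eff b q ≤ ∑ j ∈ gs.fiber q, b j := by
  by_cases hq : gs.kind q = .compl
  · rw [gs.eff_of_compl b hq]
    exact Finset.card_nsmul_le_sum _ _ _ fun j hj => Finset.inf'_le b hj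
  · rw [gs.eff_of_ne_compl b hq]
    exact Finset.sup'_le _ _ fun j hj => Finset.single_le_sum (fun i _ => hb i) hj

theorem respects_iff_eff_eq_sum_fiber (hb : 0 ≤ b) :
    gs.Respects b ↔ ∀ q, gs.eff b q = ∑ j ∈ gs.fiber q, b j := by
  constructor
  · rintro ⟨hcompl, hsubst⟩ q
    cases hq : gs.kind q with
    | compl =>
      rw [gs.eff_of_compl b hq]
      exact (card_nsmul_inf'_eq_sum_iff _ b).2 (hcompl q hq)
    | subst =>
      rw [gs.eff_of_ne_compl b (by simp [hq])]
      exact (sup'_eq_sum_iff _ fun j _ => hb j).2 (hsubst q hq)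
    | reg =>
      have subsingleton := Finset.card_le_one.1 (gs.reg_singleton q hq).le
      rw [gs.eff_of_ne_compl b (by simp [hq])]
      exact (sup'_eq_sum_iff _ fun j _ => hb j).2 fun i hi j hj hij =>
        absurd (subsingleton i hi j hj) hij
  · intro h
    refine ⟨fun q hq => ?_, fun q hq => ?_⟩
    · rw [← card_nsmul_inf'_eq_sum_iff (gs.fiber_nonempty q), ← gs.eff_of_compl b hq]
      exact h q
    · rw [← sup'_eq_sum_iff (gs.fiber_nonempty q) fun j _ => hb j,
        ← gs.eff_of_ne_compl b (by simp [hq])]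
      exact h q

theorem sum_sum_fiber (b : Fin m → ℝ) : ∑ q, ∑ j ∈ gs.fiber q, b j = ∑ j, b j :=
  Finset.sum_fiberwise _ _ _

theorem sum_eff_le_sum (hb : 0 ≤ b) : ∑ q, gs.eff b q ≤ ∑ j, b j :=
  gs.sum_sum_fiber b ▸ Finset.sum_le_sum fun q _ => gs.eff_le_sum_fiber hb q

theorem sum_eff_eq_sum_iff_respects (hb : 0 ≤ b) :
    ∑ q, gs.eff b q = ∑ j, b j ↔ gs.Respects b := by
  rw [← gs.sum_sum_fiber, Finset.sum_eq_sum_iff_of_le fun q _ => gs.eff_le_sum_fiber hb q,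
    gs.respects_iff_eff_eq_sum_fiber hb]
  simp only [Finset.mem_univ, true_imp_iff]

theorem sum_eff_lt_one (hb : IsBudget b) (hviol : ¬gs.Respects b) : ∑ q, gs.eff b q < 1 := by
  rw [← hb.2]
  exact (gs.sum_eff_le_sum hb.1).lt_of_ne (mt (gs.sum_eff_eq_sum_iff_respects hb.1).1 hviol)

end Efficiency

section Realization

variable {m : ℕ} (gs : ProjectGroups m)

/-- A chosen project of group `q`, on which the spending of a perfect substitute or regular group
can be concentrated. -/
noncomputable def representative (q : Fin gs.numGroups) : Fin m :=
  Function.surjInv gs.nonempty q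

theorem representative_mem_fiber (q : Fin gs.numGroups) : gs.representative q ∈ gs.fiber q :=
  gs.mem_fiber.2 (Function.surjInv_eq gs.nonempty q)

/-- An allocation with prescribed efficiency vector `e`: the amount `e q` is split evenly within a
perfect complement group `q` and is given to the representative of any other group `q`. -/
noncomputable def realize (e : Fin gs.numGroups → ℝ) (j : Fin m) : ℝ :=
  match gs.kind (gs.grp j) with
  | .compl => e (gs.grp j) / (gs.fiber (gs.grp j)).card
  | .subst | .reg => if j = gs.representative (gs.grp j) then e (gs.grp j) else 0

variable {gs} {e : Fin gs.numGroups → ℝ} {q : Fin gs.numGroups} {j : Fin m}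

theorem realize_of_compl (hq : gs.kind q = .compl) (hj : j ∈ gs.fiber q) :
    gs.realize e j = e q / (gs.fiber q).card := by
  obtain rfl := gs.mem_fiber.1 hj
  rw [realize, hq]

theorem realize_of_ne_compl (hq : gs.kind q ≠ .compl) (hj : j ∈ gs.fiber q) :
    gs.realize e j = if j = gs.representative q then e q else 0 := by
  obtain rfl := gs.mem_fiber.1 hj
  unfold realize
  split <;> first | contradiction | rfl

theorem realize_nonneg (he : 0 ≤ e) : 0 ≤ gs.realize e := by
  intro j
  have hj : j ∈ gs.fiber (gs.grp j) := gs.mem_fiber.2 rfl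
  by_cases hq : gs.kind (gs.grp j) = .compl
  · rw [realize_of_compl hq hj]
    exact div_nonneg (he _) (Nat.cast_nonneg _)
  · rw [realize_of_ne_compl hq hj]
    exact ite_nonneg (he _) le_rfl

theorem respects_realize (e : Fin gs.numGroups → ℝ) : gs.Respects (gs.realize e) := by
  refine ⟨fun q hq i hi j hj => ?_, fun q hq i hi j hj hij => ?_⟩
  · rw [realize_of_compl hq hi, realize_of_compl hq hj]
  · rintro ⟨hi_pos, hj_pos⟩
    have eq_representative : ∀ l ∈ gs.fiber q, 0 < gs.realize e l → l = gs.representative q := by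
      intro l hl hl_pos
      rw [realize_of_ne_compl (by simp [hq]) hl] at hl_pos
      exact by_contra fun hne => hl_pos.ne' (if_neg hne)
    exact hij ((eq_representative i hi hi_pos).trans (eq_representative j hj hj_pos).symm)

theorem eff_realize (he : 0 ≤ e) : gs.eff (gs.realize e) = e := by
  funext q
  by_cases hq : gs.kind q = .compl
  · have hcard : ((gs.fiber q).card : ℝ) ≠ 0 := by
      exact_mod_cast (gs.fiber_nonempty q).card_ne_zero
    rw [gs.eff_of_compl _ hq,
      Finset.inf'_congr (gs.fiber_nonempty q) rfl fun j hj => realize_of_compl hq hj,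
      Finset.inf'_const, nsmul_eq_mul, mul_div_cancel₀ _ hcard]
  · rw [gs.eff_of_ne_compl _ hq,
      Finset.sup'_congr (gs.fiber_nonempty q) rfl fun j hj => realize_of_ne_compl hq hj]
    refine le_antisymm (Finset.sup'_le _ _ fun j _ => ?_) ?_
    · split_ifs
      exacts [le_rfl, he q]
    · exact Finset.le_sup'_of_le _ (gs.representative_mem_fiber q) (if_pos rfl).ge

theorem sum_realize (he : 0 ≤ e) : ∑ j, gs.realize e j = ∑ q, e q := by
  rw [← (gs.sum_eff_eq_sum_iff_respects (realize_nonneg he)).2 (respects_realize e),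
    eff_realize he]

theorem isBudget_realize (he : 0 ≤ e) (hsum : ∑ q, e q = 1) : IsBudget (gs.realize e) :=
  ⟨realize_nonneg he, (sum_realize he).trans hsum⟩

end Realization

section Overlap

variable {m : ℕ} {gs : ProjectGroups m} {z z' : Fin m → ℝ}

theorem exists_eff_le_of_not_respects (hz : IsBudget z) (hviol : ¬gs.Respects z)
    (p : Fin gs.numGroups) :
    ∃ z', IsBudget z' ∧ gs.eff z ≤ gs.eff z' ∧ gs.eff z p < gs.eff z' p := by
  set slack : ℝ := 1 - ∑ q, gs.eff z q with slack_def
  have slack_pos : 0 < slack := sub_pos.2 (gs.sum_eff_lt_one hz hviol)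
  have single_nonneg : (0 : Fin gs.numGroups → ℝ) ≤ Pi.single p slack :=
    Pi.single_nonneg.2 slack_pos.le
  let target : Fin gs.numGroups → ℝ := gs.eff z + Pi.single p slack
  have target_nonneg : 0 ≤ target := add_nonneg (gs.eff_nonneg hz.1) single_nonneg
  have target_sum : ∑ q, target q = 1 := by
    simp [target, Finset.sum_add_distrib, slack_def]
  refine ⟨_, isBudget_realize target_nonneg target_sum, ?_, ?_⟩ <;> rw [eff_realize target_nonneg]
  · exact le_add_of_nonneg_right single_nonneg
  · simpa [target] using slack_pos

theorem iutil_le_iutil (hle : gs.eff z ≤ gs.eff z') (b : Fin m → ℝ) :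
    iutil gs z b ≤ iutil gs z' b :=
  Finset.sum_le_sum fun q _ => min_le_min_right _ (hle q)

theorem iutil_lt_iutil {b : Fin m → ℝ} {p : Fin gs.numGroups} (hle : gs.eff z ≤ gs.eff z')
    (hlt : gs.eff z p < gs.eff z' p) (hb : gs.eff z p < gs.eff b p) :
    iutil gs z b < iutil gs z' b := by
  refine Finset.sum_lt_sum (fun q _ => min_le_min_right _ (hle q)) ⟨p, Finset.mem_univ p, ?_⟩
  rw [min_eq_left hb.le]
  exact lt_min hlt hb

end Overlap

end ProjectGroups

open ProjectGroups in
theorem median_outcome_respects_interactions_general {m : ℕ} (gs : ProjectGroups m)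
    {ι : Type*} [Fintype ι] (v : ι → Fin m → ℝ) (hv : ∃ i, IsBudget (v i) ∧ gs.Respects (v i))
    {z : Fin m → ℝ} (hz : IsBudget z)
    (hmax : ∀ z', IsBudget z' → ∑ i, iutil gs z' (v i) ≤ ∑ i, iutil gs z (v i)) :
    gs.Respects z := by
  by_contra hviol
  obtain ⟨i, hi, hi_resp⟩ := hv
  have sum_eff_lt : ∑ q, gs.eff z q < ∑ q, gs.eff (v i) q := by
    rw [(gs.sum_eff_eq_sum_iff_respects hi.1).2 hi_resp, hi.2]
    exact gs.sum_eff_lt_one hz hviol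
  obtain ⟨p, -, hp⟩ := Finset.exists_lt_of_sum_lt sum_eff_lt
  obtain ⟨z', hz', hle, hlt⟩ := exists_eff_le_of_not_respects hz hviol p
  exact (hmax z' hz').not_gt <| Finset.sum_lt_sum (fun k _ => iutil_le_iutil hle (v k))
    ⟨i, Finset.mem_univ i, iutil_lt_iutil hle hlt hp⟩

/-- Median schemes respect project interactions: if at least one of the budgets
`a, b` respects the project interactions, then every budget `z` maximizing
`û(z,a) + û(z,b) + û(z,c)` over all budgets respects the project interactions. -/
theorem median_outcome_respects_interactions {m : ℕ} (gs : ProjectGroups m)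
    (a b c : Fin m → ℝ) (ha : IsBudget a) (hb : IsBudget b) (hc : IsBudget c)
    (hab : gs.Respects a ∨ gs.Respects b)
    (z : Fin m → ℝ) (hz : IsBudget z)
    (hmax : ∀ z' : Fin m → ℝ, IsBudget z' →
      iutil gs z' a + iutil gs z' b + iutil gs z' c ≤
        iutil gs z a + iutil gs z b + iutil gs z c) :
    gs.Respects z :=
  median_outcome_respects_interactions_general gs ![a, b, c]
    (hab.elim (⟨0, ha, ·⟩) (⟨1, hb, ·⟩)) hz (by simpa [Fin.sum_univ_three] using hmax)
end
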